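/- There exists a constant C, independent of m, with the following property: for every integer m ≥ 1 and all axially symmetric functions u, ω, with u twice and ω once continuously differentiable on a neighborhood of the closure of D_m, satisfying ∂_r² u + (1/r) ∂_r u + ∂_{x₃}² u − u/r² = ∂_{x₃} ω in D_m, ∂_{x₃} u = 0 on ∂^H D_m, and u = 0 on ∂^V D_m, one has sup_{D_m} |u| ≤ C ( sup_{D_m} |ω| + 1 )^{13/3} ( ∫_{D_m} ( |u| + 1 )² dx )^{1/2}. -/

import Mathlib

noncomputable section

open Real MeasureTheory Set

/-- Inner radius of the `j`-th rectangle: `r_j = 2^(-j)`. -/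
def rW (j : ℕ) : ℝ := (2 : ℝ) ^ (-(j : ℝ))

/-- Height of the `j`-th rectangle: `h_j = 2^(-β (j-1))`. -/
def hH (β : ℝ) (j : ℕ) : ℝ := (2 : ℝ) ^ (-β * ((j : ℝ) - 1))

/-- The rectangle `S_j` in the `(r, x₃)` cross-section. -/
def Srect (β : ℝ) (j : ℕ) : Set (ℝ × ℝ) :=
  {p : ℝ × ℝ | rW j ≤ p.1 ∧ p.1 < rW (j - 1) ∧ 0 < p.2 ∧ p.2 < hH β j}

/-- The `(r, x₃)` cross-section of the domain `D_m`. -/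
def Ddom (β : ℝ) (m : ℕ) : Set (ℝ × ℝ) := ⋃ j ∈ Finset.Icc 1 m, Srect β j

/-- The horizontal part `∂^H D_m` of the boundary of `D_m` (where `x₃` is locally constant). -/
def bdH (β : ℝ) (m : ℕ) : Set (ℝ × ℝ) :=
  {p : ℝ × ℝ | p.2 = 0 ∧ rW m ≤ p.1 ∧ p.1 ≤ 1} ∪
    ⋃ j ∈ Finset.Icc 1 m,
      {p : ℝ × ℝ | p.2 = hH β j ∧ rW j ≤ p.1 ∧ p.1 ≤ rW (j - 1)}

/-- The vertical part `∂^V D_m` of the boundary of `D_m` (where `r` is locally constant). -/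
def bdV (β : ℝ) (m : ℕ) : Set (ℝ × ℝ) :=
  {p : ℝ × ℝ | p.1 = 1 ∧ 0 ≤ p.2 ∧ p.2 ≤ 1} ∪
    {p : ℝ × ℝ | p.1 = rW m ∧ 0 ≤ p.2 ∧ p.2 ≤ hH β m} ∪
    ⋃ j ∈ Finset.Icc 1 (m - 1),
      {p : ℝ × ℝ | p.1 = rW j ∧ hH β (j + 1) ≤ p.2 ∧ p.2 ≤ hH β j}

/-- The full boundary `∂ D_m` of `D_m`. -/
def bdD (β : ℝ) (m : ℕ) : Set (ℝ × ℝ) := bdH β m ∪ bdV β m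

/-- The corner points of the polygonal cross-section of `D_m`
(i.e. the corner circles of the 3D domain). -/
def cornerSet (β : ℝ) (m : ℕ) : Set (ℝ × ℝ) :=
  ({(rW m, 0), ((1 : ℝ), 0), ((1 : ℝ), (1 : ℝ)), (rW m, hH β m)} : Set (ℝ × ℝ)) ∪
    ⋃ j ∈ Finset.Icc 1 (m - 1),
      ({(rW j, hH β j), (rW j, hH β (j + 1))} : Set (ℝ × ℝ))

/-- Radial partial derivative `∂_r`. -/
def pdr (F : ℝ × ℝ → ℝ) (p : ℝ × ℝ) : ℝ := deriv (fun r => F (r, p.2)) p.1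

/-- Vertical partial derivative `∂_{x₃}`. -/
def pdz (F : ℝ × ℝ → ℝ) (p : ℝ × ℝ) : ℝ := deriv (fun z => F (p.1, z)) p.2

/-- The axially symmetric Laplacian `Δ = ∂_r² + (1/r) ∂_r + ∂_{x₃}²`. -/
def cylLap (F : ℝ × ℝ → ℝ) (p : ℝ × ℝ) : ℝ :=
  pdr (pdr F) p + (1 / p.1) * pdr F p + pdz (pdz F) p

/-- The integral of an axially symmetric function over the 3-dimensional domain `D_m`,
computed in the cross-section: `∫_{D_m} f dx = 2π ∬ F r dr dx₃`. -/
def cylIntegral (β : ℝ) (m : ℕ) (F : ℝ × ℝ → ℝ) : ℝ :=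
  ∫ p in Ddom β m, F p * (2 * π * p.1)

/-- The vertical cross-section segment `D_m ∩ {r = c}` of the cross-section. -/
def vertSeg (β : ℝ) (m : ℕ) (c : ℝ) : Set ℝ := {z : ℝ | (c, z) ∈ Ddom β m}

lemma aux_possq (x : ℝ) : HasDerivAt (fun t : ℝ => (max t 0)^2) (2 * max x 0) x := by
  rcases lt_trichotomy x 0 with h | h | h
  · have : (fun t : ℝ => (max t 0)^2) =ᶠ[nhds x] fun _ => 0 := by
      filter_upwards [Iio_mem_nhds h] with t ht
      simp [max_eq_right (le_of_lt (show t < 0 from ht))]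
    rw [max_eq_right h.le]
    simpa using (hasDerivAt_const x (0:ℝ)).congr_of_eventuallyEq this
  · subst h
    rw [hasDerivAt_iff_isLittleO]
    have h2 : (fun t : ℝ => t^2) =o[nhds 0] fun t : ℝ => t := by
      simpa using Asymptotics.isLittleO_pow_pow (𝕜 := ℝ) (m := 1) (n := 2) (by norm_num)
    have h3 : (fun t : ℝ => (max t 0)^2) =O[nhds 0] fun t : ℝ => t^2 := by
      apply Asymptotics.IsBigO.of_bound 1
      filter_upwards with t
      rw [Real.norm_of_nonneg (by positivity), Real.norm_of_nonneg (by positivity), one_mul]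
      rcases le_total t 0 with h | h
      · rw [max_eq_right h]; simpa using sq_nonneg t
      · rw [max_eq_left h]
    simpa using h3.trans_isLittleO h2
  · have : (fun t : ℝ => (max t 0)^2) =ᶠ[nhds x] fun t => t^2 := by
      filter_upwards [Ioi_mem_nhds h] with t ht
      simp [max_eq_left (le_of_lt (show 0 < t from ht))]
    rw [max_eq_left h.le]
    simpa using (hasDerivAt_pow 2 x).congr_of_eventuallyEq this

lemma meas_z {D : Set (ℝ × ℝ)} (hD : MeasurableSet D) (r : ℝ) :
    MeasurableSet {z : ℝ | (r, z) ∈ D} := hD.preimage measurable_prodMk_left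

lemma meas_r {D : Set (ℝ × ℝ)} (hD : MeasurableSet D) (z : ℝ) :
    MeasurableSet {r : ℝ | (r, z) ∈ D} := hD.preimage measurable_prodMk_right

lemma fub_z (D : Set (ℝ × ℝ)) (hD : MeasurableSet D) (G : ℝ × ℝ → ℝ) (hG : IntegrableOn G D) :
    ∫ p in D, G p = ∫ r, ∫ z in {z | (r, z) ∈ D}, G (r, z) := by
  rw [← integral_indicator hD, Measure.volume_eq_prod, integral_prod]
  · congr 1; ext r
    rw [← integral_indicator (meas_z hD r)]
    rfl
  · rw [← Measure.volume_eq_prod, integrable_indicator_iff hD]; exact hG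

lemma fub_r (D : Set (ℝ × ℝ)) (hD : MeasurableSet D) (G : ℝ × ℝ → ℝ) (hG : IntegrableOn G D) :
    ∫ p in D, G p = ∫ z, ∫ r in {r | (r, z) ∈ D}, G (r, z) := by
  rw [← integral_indicator hD, Measure.volume_eq_prod, integral_prod_symm]
  · congr 1; ext z
    rw [← integral_indicator (meas_r hD z)]
    rfl
  · rw [← Measure.volume_eq_prod, integrable_indicator_iff hD]; exact hG

lemma prod_bound (D : Set (ℝ × ℝ)) (hD : MeasurableSet D) (F A B : ℝ × ℝ → ℝ)
    (_hF : IntegrableOn F D) (hA : IntegrableOn A D) (hB : IntegrableOn B D)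
    (hF0 : ∀ p ∈ D, 0 ≤ F p)
    (hA0 : ∀ p ∈ D, 0 ≤ A p) (hB0 : ∀ p ∈ D, 0 ≤ B p)
    (h1 : ∀ p ∈ D, F p ≤ ∫ r in {r | (r, p.2) ∈ D}, A (r, p.2))
    (h2 : ∀ p ∈ D, F p ≤ ∫ z in {z | (p.1, z) ∈ D}, B (p.1, z)) 
    (hFF : IntegrableOn (fun p => F p ^ 2) D) :
    ∫ p in D, F p ^ 2 ≤ (∫ p in D, A p) * ∫ p in D, B p := by
  have hA' : Integrable (D.indicator A) (volume.prod volume) := by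
    rw [← Measure.volume_eq_prod, integrable_indicator_iff hD]; exact hA
  have hB' : Integrable (D.indicator B) (volume.prod volume) := by
    rw [← Measure.volume_eq_prod, integrable_indicator_iff hD]; exact hB
  have ea : ∀ z, ∫ r in {r | (r, z) ∈ D}, A (r, z) = ∫ r, D.indicator A (r, z) := by
    intro z
    rw [← integral_indicator (meas_r hD z)]
    rfl
  have eb : ∀ r, ∫ z in {z | (r, z) ∈ D}, B (r, z) = ∫ z, D.indicator B (r, z) := by
    intro r
    rw [← integral_indicator (meas_z hD r)]
    rfl
  have ia : Integrable (fun z => ∫ r in {r | (r, z) ∈ D}, A (r, z)) := by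
    simp_rw [ea]; exact hA'.integral_prod_right
  have ib : Integrable (fun r => ∫ z in {z | (r, z) ∈ D}, B (r, z)) := by
    simp_rw [eb]; exact hB'.integral_prod_left
  have a0 : ∀ z, 0 ≤ ∫ r in {r | (r, z) ∈ D}, A (r, z) := fun z =>
    setIntegral_nonneg (hD.preimage measurable_prodMk_right) (fun r hr => hA0 _ hr)
  have b0 : ∀ r, 0 ≤ ∫ z in {z | (r, z) ∈ D}, B (r, z) := fun r =>
    setIntegral_nonneg (hD.preimage measurable_prodMk_left) (fun z hz => hB0 _ hz)
  rw [fub_r D hD A hA, fub_z D hD B hB, mul_comm, ← integral_prod_mul, ← integral_indicator hD,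
    ← Measure.volume_eq_prod]
  apply integral_mono
  · rw [integrable_indicator_iff hD]; exact hFF
  · exact ib.mul_prod ia
  · intro p
    by_cases hp : p ∈ D
    · rw [indicator_of_mem hp, sq]
      exact mul_le_mul (h2 p hp) (h1 p hp) (hF0 p hp) (b0 _)
    · rw [indicator_of_notMem hp]
      exact mul_nonneg (b0 _) (a0 _)

/-- 1D bound -/
lemma oneD (f f' : ℝ → ℝ) (H c : ℝ) (hc : 0 < c) (hcH : c ≤ H)
    (hd : ∀ x ∈ Icc 0 H, HasDerivAt f (f' x) x) (hf' : ContinuousOn f' (Icc 0 H))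
    (h0 : ∀ x ∈ Icc 0 H, 0 ≤ f x) (x : ℝ) (hx : x ∈ Icc 0 H) :
    f x ≤ ∫ z in Ioo 0 H, (f z / c + |f' z|) := by
  have hH : 0 < H := hc.trans_le hcH
  have hfc : ContinuousOn f (Icc 0 H) := fun y hy => (hd y hy).continuousAt.continuousWithinAt
  have i1 : IntegrableOn f (Icc 0 H) := hfc.integrableOn_Icc
  have i2 : IntegrableOn (fun z => |f' z|) (Icc 0 H) := hf'.abs.integrableOn_Icc
  set J := ∫ z in Icc 0 H, |f' z| with hJ
  have key : ∀ y ∈ Icc 0 H, f x - J ≤ f y := by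
    intro y hy
    have hsub : uIcc y x ⊆ Icc 0 H := by
      rw [← uIcc_of_le hH.le] at hx hy ⊢
      exact uIcc_subset_uIcc hy hx
    have e : ∫ t in y..x, f' t = f x - f y :=
      intervalIntegral.integral_eq_sub_of_hasDerivAt (fun t ht => hd t (hsub ht))
        ((hf'.mono hsub).intervalIntegrable)
    have : |∫ t in y..x, f' t| ≤ J := by
      have h1 := intervalIntegral.norm_integral_le_integral_norm_uIoc (f := f') (a := y) (b := x) (μ := volume)
      refine h1.trans ?_
      exact setIntegral_mono_set i2 (Filter.Eventually.of_forall fun t => abs_nonneg _)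
        (Filter.Eventually.of_forall (uIoc_subset_uIcc.trans hsub))
    have := (le_abs_self _).trans this
    linarith
  have h3 : (f x - J) * H ≤ ∫ z in Icc 0 H, f z := by
    have := setIntegral_mono_on (μ := volume) (s := Icc 0 H) (f := fun _ => f x - J) (g := f)
      (by simp) i1 measurableSet_Icc key
    simpa [hH.le, mul_comm] using this
  have hI0 : 0 ≤ ∫ z in Icc 0 H, f z := setIntegral_nonneg measurableSet_Icc h0
  rw [← integral_Icc_eq_integral_Ioo, integral_add (i1.div_const c) i2, integral_div]
  have : f x - J ≤ (∫ z in Icc 0 H, f z) / c := by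
    rw [le_div_iff₀ hc]
    rcases le_total (f x - J) 0 with h | h
    · nlinarith
    · nlinarith
  linarith

structure Geo (D : Set (ℝ × ℝ)) (u ur uz urr uzz ω ωz : ℝ × ℝ → ℝ) (W : ℝ) : Prop where
  meas : MeasurableSet D
  cpt : IsCompact (closure D)
  pos : ∀ p ∈ closure D, 0 < p.1 ∧ p.1 ≤ 1
  int : D ⊆ closure (interior D)
  secr : ∀ z, {r : ℝ | (r, z) ∈ D} = ∅ ∨ ∃ ρ, ρ < 1 ∧ {r : ℝ | (r, z) ∈ D} = Ico ρ 1 ∧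
    u (ρ, z) = 0 ∧ u (1, z) = 0
  secz : ∀ r, {z : ℝ | (r, z) ∈ D} = ∅ ∨ ∃ H, r ^ 2 ≤ H ∧ 0 < H ∧ {z : ℝ | (r, z) ∈ D} = Ioo 0 H ∧
    uz (r, 0) = 0 ∧ uz (r, H) = 0
  cu : ContinuousOn u (closure D)
  cur : ContinuousOn ur (closure D)
  cuz : ContinuousOn uz (closure D)
  curr : ContinuousOn urr (closure D)
  cuzz : ContinuousOn uzz (closure D)
  cω : ContinuousOn ω (closure D)
  cωz : ContinuousOn ωz (closure D)
  dur : ∀ p ∈ closure D, HasDerivAt (fun r => u (r, p.2)) (ur p) p.1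
  duz : ∀ p ∈ closure D, HasDerivAt (fun z => u (p.1, z)) (uz p) p.2
  durr : ∀ p ∈ closure D, HasDerivAt (fun r => ur (r, p.2)) (urr p) p.1
  duzz : ∀ p ∈ closure D, HasDerivAt (fun z => uz (p.1, z)) (uzz p) p.2
  dωz : ∀ p ∈ closure D, HasDerivAt (fun z => ω (p.1, z)) (ωz p) p.2
  pde : ∀ p ∈ D, urr p + ur p / p.1 + uzz p - u p / p.1 ^ 2 = ωz p
  hW : 1 ≤ W
  hω : ∀ p ∈ closure D, |ω p| ≤ W

namespace Geo

variable {D : Set (ℝ × ℝ)} {u ur uz urr uzz ω ωz : ℝ × ℝ → ℝ} {W : ℝ}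

/-- truncation -/
def vv (u : ℝ × ℝ → ℝ) (k : ℝ) (p : ℝ × ℝ) : ℝ := max (u p - k) 0

lemma vv_nonneg (u : ℝ × ℝ → ℝ) (k : ℝ) (p : ℝ × ℝ) : 0 ≤ vv u k p := le_max_right _ _

lemma cvv (g : Geo D u ur uz urr uzz ω ωz W) (k : ℝ) : ContinuousOn (vv u k) (closure D) :=
  ContinuousOn.sup (g.cu.sub continuousOn_const) continuousOn_const

lemma intg (g : Geo D u ur uz urr uzz ω ωz W) {G : ℝ × ℝ → ℝ} (hG : ContinuousOn G (closure D)) :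
    IntegrableOn G D :=
  (hG.integrableOn_compact g.cpt).mono_set subset_closure

lemma cinv (g : Geo D u ur uz urr uzz ω ωz W) :
    ContinuousOn (fun p : ℝ × ℝ => (p.1)⁻¹) (closure D) :=
  continuousOn_fst.inv₀ fun p hp => (g.pos p hp).1.ne'

lemma dvr (g : Geo D u ur uz urr uzz ω ωz W) (k : ℝ) (p : ℝ × ℝ) (hp : p ∈ closure D) :
    HasDerivAt (fun r => vv u k (r, p.2) ^ 2) (2 * vv u k p * ur p) p.1 := by
  have := (aux_possq (u p - k)).comp p.1 (h := fun r => u (r, p.2) - k) ((g.dur p hp).sub_const k)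
  exact this

lemma dvz (g : Geo D u ur uz urr uzz ω ωz W) (k : ℝ) (p : ℝ × ℝ) (hp : p ∈ closure D) :
    HasDerivAt (fun z => vv u k (p.1, z) ^ 2) (2 * vv u k p * uz p) p.2 := by
  have := (aux_possq (u p - k)).comp p.2 (h := fun z => u (p.1, z) - k) ((g.duz p hp).sub_const k)
  exact this

lemma segr {ρ z : ℝ} (hρ : ρ < 1) (h : {r : ℝ | (r, z) ∈ D} = Ico ρ 1) :
    ∀ r ∈ Icc ρ 1, (r, z) ∈ closure D := by
  intro r hr
  rw [← closure_Ico hρ.ne] at hr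
  exact map_mem_closure (f := fun r : ℝ => (r, z)) (by fun_prop) hr
    (fun x hx => by rw [← h] at hx; exact hx)

lemma segz {H r : ℝ} (hρ : 0 < H) (h : {z : ℝ | (r, z) ∈ D} = Ioo 0 H) :
    ∀ z ∈ Icc 0 H, (r, z) ∈ closure D := by
  intro z hr
  rw [← closure_Ioo hρ.ne] at hr
  exact map_mem_closure (f := fun z : ℝ => (r, z)) (by fun_prop) hr
    (fun x hx => by rw [← h] at hx; exact hx)

lemma ftcr {ρ z : ℝ} (hρ : ρ < 1) (h : {r : ℝ | (r, z) ∈ D} = Ico ρ 1) (f f' : ℝ × ℝ → ℝ)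
    (hd : ∀ p ∈ closure D, HasDerivAt (fun r => f (r, p.2)) (f' p) p.1)
    (hc : ContinuousOn f' (closure D)) (a : ℝ) (ha : a ∈ Icc ρ 1) :
    ∫ r in a..1, f' (r, z) = f (1, z) - f (a, z) := by
  have hs := segr hρ h
  have hsub : uIcc a 1 ⊆ Icc ρ 1 := by
    rw [uIcc_of_le ha.2]; exact Icc_subset_Icc_left ha.1
  refine intervalIntegral.integral_eq_sub_of_hasDerivAt (f := fun r => f (r, z))
    (fun r hr => hd (r, z) (hs r (hsub hr))) ?_
  apply ContinuousOn.intervalIntegrable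
  exact hc.comp (by fun_prop) (fun r hr => hs r (hsub hr))

lemma ftcz {H r : ℝ} (hH : 0 < H) (h : {z : ℝ | (r, z) ∈ D} = Ioo 0 H) (f f' : ℝ × ℝ → ℝ)
    (hd : ∀ p ∈ closure D, HasDerivAt (fun z => f (p.1, z)) (f' p) p.2)
    (hc : ContinuousOn f' (closure D)) :
    ∫ z in {z : ℝ | (r, z) ∈ D}, f' (r, z) = f (r, H) - f (r, 0) := by
  have hs := segz hH h
  rw [h, ← integral_Ioc_eq_integral_Ioo, ← intervalIntegral.integral_of_le hH.le]
  have hsub : uIcc 0 H ⊆ Icc 0 H := by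
    rw [uIcc_of_le hH.le]
  refine intervalIntegral.integral_eq_sub_of_hasDerivAt (f := fun z => f (r, z))
    (fun z hr => hd (r, z) (hs z (hsub hr))) ?_
  apply ContinuousOn.intervalIntegrable
  exact hc.comp (by fun_prop) (fun r hr => hs r (hsub hr))

lemma vv_zero {k : ℝ} (hk : 0 ≤ k) {p : ℝ × ℝ} (h : u p = 0) : vv u k p = 0 := by
  simp [vv, h, hk]

/-- column bound -/
lemma colz (g : Geo D u ur uz urr uzz ω ωz W) (k : ℝ) {H r : ℝ} (hr : r ^ 2 ≤ H) (hH : 0 < H)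
    (h : {z : ℝ | (r, z) ∈ D} = Ioo 0 H) (z : ℝ) (hz : z ∈ Icc 0 H) :
    vv u k (r, z) ^ 2 ≤ ∫ z in {z : ℝ | (r, z) ∈ D},
      (vv u k (r, z) ^ 2 / r ^ 2 + |2 * vv u k (r, z) * uz (r, z)|) := by
  have hs := segz hH h
  have hp := (g.pos _ (hs z hz)).1
  simp only at hp
  rw [h]
  refine oneD (fun z => vv u k (r, z) ^ 2) (fun z => 2 * vv u k (r, z) * uz (r, z)) H (r ^ 2)
    (by positivity) hr (fun x hx => g.dvz k (r, x) (hs x hx)) ?_ (fun x hx => by positivity) z hz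
  have c : ContinuousOn (fun p => 2 * vv u k p * uz p) (closure D) :=
    (continuousOn_const.mul (g.cvv k)).mul g.cuz
  exact c.comp (by fun_prop) (fun r hr => hs r hr)

lemma energy (g : Geo D u ur uz urr uzz ω ωz W) (k : ℝ) (hk : 4 * W ≤ k) :
    0 ≤ ∫ p in D, (9 * W ^ 2 * (p.1 * vv u k p) - p.1 * vv u k p * (ur p ^ 2 + uz p ^ 2)
      - 2 * W * (vv u k p ^ 2 * p.1⁻¹)) := by
  have hW := g.hW
  have cv := g.cvv k
  have cinv := g.cinv
  have cur := g.cur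
  have cuz := g.cuz
  have curr := g.curr
  have cuzz := g.cuzz
  have cω := g.cω
  have cωz := g.cωz
  have cu := g.cu
  have hk0 : 0 ≤ k := by linarith
  set v := vv u k with hv
  let T1 : ℝ × ℝ → ℝ := fun p => (1 * ur p + p.1 * urr p) * v p ^ 2 + p.1 * ur p * (2 * v p * ur p)
  let T2 : ℝ × ℝ → ℝ := fun p => p.1 * (uzz p * v p ^ 2 + uz p * (2 * v p * uz p))
  let T3 : ℝ × ℝ → ℝ := fun p => p.1 * (ωz p * v p ^ 2 + ω p * (2 * v p * uz p))
  let M : ℝ × ℝ → ℝ := fun p => (2 * W * p.1) * (v p ^ 2 / p.1 ^ 2 + |2 * v p * uz p|)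
  have c1 : ContinuousOn T1 (closure D) := by fun_prop
  have c2 : ContinuousOn T2 (closure D) := by fun_prop
  have c3 : ContinuousOn T3 (closure D) := by fun_prop
  have cN : ContinuousOn (fun p => (v p ^ 2 / p.1 ^ 2 + |2 * v p * uz p|)) (closure D) := by
    apply ContinuousOn.add
    · apply ContinuousOn.div (by fun_prop) (by fun_prop)
      intro p hp
      have := (g.pos p hp).1
      positivity
    · exact ContinuousOn.abs (by fun_prop)
  have cM : ContinuousOn M (closure D) := by
    exact ContinuousOn.mul (by fun_prop) cN
  have I1 : ∫ p in D, T1 p = 0 := by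
    rw [fub_r D g.meas T1 (g.intg c1)]
    rw [show (fun z => ∫ r in {r | (r, z) ∈ D}, T1 (r, z)) = fun _ => 0 from ?_]
    · simp
    ext z
    rcases g.secr z with h | ⟨ρ, hρ, h, h0, h1⟩
    · rw [h]; simp
    · rw [h, integral_Ico_eq_integral_Ioo, ← integral_Ioc_eq_integral_Ioo,
        ← intervalIntegral.integral_of_le hρ.le]
      rw [ftcr hρ h (fun p => p.1 * ur p * v p ^ 2) T1 ?_ c1 ρ ⟨le_rfl, hρ.le⟩]
      · simp [hv, vv_zero hk0 h0, vv_zero hk0 h1]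
      · intro p hp
        exact ((hasDerivAt_id p.1).mul (g.durr p hp)).mul (g.dvr k p hp)
  have I2 : ∫ p in D, T2 p = 0 := by
    rw [fub_z D g.meas T2 (g.intg c2)]
    rw [show (fun r => ∫ z in {z | (r, z) ∈ D}, T2 (r, z)) = fun _ => 0 from ?_]
    · simp
    ext r
    rcases g.secz r with h | ⟨H, hr, hH, h, h0, h1⟩
    · rw [h]; simp
    · rw [ftcz hH h (fun p => p.1 * (uz p * v p ^ 2)) T2 ?_ c2]
      · simp [h0, h1]
      · intro p hp
        exact ((g.duzz p hp).mul (g.dvz k p hp)).const_mul p.1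
  have I3 : 0 ≤ ∫ p in D, (M p + T3 p) := by
    rw [fub_z D g.meas (fun p => M p + T3 p) (g.intg (cM.add c3))]
    apply integral_nonneg
    intro r
    simp only [Pi.zero_apply]
    rcases g.secz r with h | ⟨H, hr, hH, h, -, -⟩
    · rw [h]; simp
    have hs := segz hH h
    have iS : ∀ G : ℝ × ℝ → ℝ, ContinuousOn G (closure D) →
        IntegrableOn (fun z => G (r, z)) {z : ℝ | (r, z) ∈ D} := by
      intro G hG
      rw [h]
      refine IntegrableOn.mono_set ?_ Ioo_subset_Icc_self
      apply ContinuousOn.integrableOn_Icc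
      exact hG.comp (by fun_prop) (fun z hz => hs z hz)
    rw [integral_add (iS M cM) (iS T3 c3)]
    rw [ftcz hH h (fun p => p.1 * (ω p * v p ^ 2)) T3 ?_ c3]
    · have m0 : (0:ℝ) ∈ Icc 0 H := ⟨le_rfl, hH.le⟩
      have m1 : H ∈ Icc 0 H := ⟨hH.le, le_rfl⟩
      have a0 := g.colz k hr hH h 0 m0
      have a1 := g.colz k hr hH h H m1
      have w0 := abs_le.1 (g.hω _ (hs _ m0))
      have w1 := abs_le.1 (g.hω _ (hs _ m1))
      have hp := (g.pos _ (hs _ m0)).1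
      simp only at hp
      rw [show ∫ z in {z : ℝ | (r, z) ∈ D}, M (r, z) = (2 * W * r) *
        ∫ z in {z : ℝ | (r, z) ∈ D}, (v (r, z) ^ 2 / r ^ 2 + |2 * v (r, z) * uz (r, z)|) from by
          simp only [M]; rw [integral_const_mul]]
      rw [← hv] at a0 a1
      set N := ∫ z in {z : ℝ | (r, z) ∈ D}, (v (r, z) ^ 2 / r ^ 2 + |2 * v (r, z) * uz (r, z)|)
      simp only
      have b0 : ω (r, 0) * v (r, 0) ^ 2 ≤ W * N :=
        (mul_le_mul_of_nonneg_right w0.2 (by positivity)).trans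
          (mul_le_mul_of_nonneg_left a0 (by linarith))
      have b1 : -(W * N) ≤ ω (r, H) * v (r, H) ^ 2 := by
        have : -W * N ≤ -W * v (r, H) ^ 2 := by nlinarith
        have := mul_le_mul_of_nonneg_right w1.1 (sq_nonneg (v (r, H)))
        linarith
      have : 0 ≤ r * (2 * (W * N) + ω (r, H) * v (r, H) ^ 2 - ω (r, 0) * v (r, 0) ^ 2) :=
        mul_nonneg hp.le (by linarith)
      linarith
    · intro p hp
      exact ((g.dωz p hp).mul (g.dvz k p hp)).const_mul p.1
  have I4 : ∫ p in D, (M p + T3 p) = ∫ p in D, (M p + T3 p - T1 p - T2 p) := by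
    have e1 := integral_sub (μ := volume.restrict D) (g.intg (cM.add c3)) (g.intg c1)
    have e2 := integral_sub (μ := volume.restrict D) (g.intg ((cM.add c3).sub c1)) (g.intg c2)
    simp only [Pi.add_apply, Pi.sub_apply] at e1 e2
    rw [e2, e1, I1, I2]; simp
  rw [I4] at I3
  refine I3.trans (setIntegral_mono_on (g.intg ((cM.add c3).sub c1 |>.sub c2))
    (g.intg (by fun_prop)) g.meas ?_)
  intro p hp
  have hr := (g.pos p (subset_closure hp)).1
  have pd := g.pde p hp
  have hω := abs_le.1 (g.hω p (subset_closure hp))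
  have v0 : 0 ≤ v p := vv_nonneg u k p
  simp only [T1, T2, T3, M]
  rw [← pd, abs_mul, abs_of_nonneg (by positivity : 0 ≤ 2 * v p)]
  have e1 : v p ^ 2 * (4 * W) ≤ v p ^ 2 * u p := by
    rcases le_total (u p) k with h | h
    · have : v p = 0 := by simp [hv, vv, h]
      simp [this]
    · exact mul_le_mul_of_nonneg_left (by linarith) (by positivity)
  have e2 : ω p * uz p ≤ W * |uz p| := by
    calc ω p * uz p ≤ |ω p * uz p| := le_abs_self _
      _ = |ω p| * |uz p| := abs_mul _ _
      _ ≤ _ := mul_le_mul_of_nonneg_right (g.hω p (subset_closure hp)) (abs_nonneg _)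
  have e3 : 0 ≤ p.1 * v p * (9 * W ^ 2 - 6 * W * |uz p| + uz p ^ 2 + ur p ^ 2) := by
    apply mul_nonneg (by positivity)
    nlinarith [sq_nonneg (3 * W - |uz p|), sq_abs (uz p), sq_nonneg (ur p)]
  have e4 : p.1 * v p * (ω p * uz p) ≤ p.1 * v p * (W * |uz p|) :=
    mul_le_mul_of_nonneg_left e2 (by positivity)
  have e5 : v p ^ 2 * (4 * W) * p.1⁻¹ ≤ v p ^ 2 * u p * p.1⁻¹ :=
    mul_le_mul_of_nonneg_right e1 (by positivity)
  have f1 : p.1 * (ur p / p.1) = ur p := by field_simp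
  have f2 : p.1 * (u p / p.1 ^ 2) = u p * p.1⁻¹ := by field_simp
  have f3 : p.1 * (v p ^ 2 / p.1 ^ 2) = v p ^ 2 * p.1⁻¹ := by field_simp
  linear_combination e3 + 2 * e4 + e5 + v p ^ 2 * f1 - v p ^ 2 * f2 + 2 * W * f3

def yy (D : Set (ℝ × ℝ)) (u : ℝ × ℝ → ℝ) (k : ℝ) : ℝ := ∫ p in D, p.1 * vv u k p

lemma yy_nonneg (g : Geo D u ur uz urr uzz ω ωz W) (k : ℝ) : 0 ≤ yy D u k :=
  setIntegral_nonneg g.meas fun p hp =>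
    mul_nonneg (g.pos p (subset_closure hp)).1.le (vv_nonneg u k p)

lemma step (g : Geo D u ur uz urr uzz ω ωz W) (k : ℝ) (hk : 4 * W ≤ k) (d l : ℝ) (hd : 0 < d)
    (hl : 0 < l) :
    2 * d ^ 2 * yy D u (k + d) ≤
      l * (54 * W ^ 2 * yy D u k ^ 2) + l⁻¹ * (9 / 2 * W * yy D u k) := by
  have hW := g.hW
  have hW0 : 0 < W := by linarith
  have cv := g.cvv k
  have cv' := g.cvv (k + d)
  have cinv := g.cinv
  have cur := g.cur
  have cuz := g.cuz
  have hk0 : 0 ≤ k := by linarith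
  have en := g.energy k hk
  have y0 := g.yy_nonneg k
  set v := vv u k with hv
  have v0 : ∀ p, 0 ≤ v p := vv_nonneg u k
  have hy : yy D u k = ∫ p in D, p.1 * v p := rfl
  set y := yy D u k
  set R : ℝ × ℝ → ℝ := fun p => (9 * W ^ 2 * (p.1 * v p) - p.1 * v p * (ur p ^ 2 + uz p ^ 2)
      - 2 * W * (v p ^ 2 * p.1⁻¹)) with hR
  have cR : ContinuousOn R (closure D) := by fun_prop
  change 0 ≤ ∫ p in D, R p at en
  have crv : ContinuousOn (fun p : ℝ × ℝ => p.1 * v p) (closure D) := by fun_prop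
  have cmp : ∀ (G : ℝ × ℝ → ℝ) (a b : ℝ), ContinuousOn G (closure D) → 0 ≤ b →
      (∀ p ∈ D, G p ≤ a * (p.1 * v p) - b * R p) → ∫ p in D, G p ≤ a * y := by
    intro G a b cG hb h
    have h1 : ∫ p in D, G p ≤ ∫ p in D, (a * (p.1 * v p) - b * R p) :=
      setIntegral_mono_on (g.intg cG) (g.intg (by fun_prop)) g.meas h
    rw [integral_sub (g.intg (by fun_prop)) (g.intg (by fun_prop)), integral_const_mul,
      integral_const_mul, ← hy] at h1
    have := mul_nonneg hb en
    linarith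
  let A : ℝ × ℝ → ℝ := fun p => p.1 * |2 * v p * ur p|
  let B : ℝ × ℝ → ℝ := fun p => p.1 * (v p ^ 2 / p.1 ^ 2 + |2 * v p * uz p|)
  have cA : ContinuousOn A (closure D) :=
    ContinuousOn.mul (by fun_prop) (ContinuousOn.abs (by fun_prop))
  have cB : ContinuousOn B (closure D) := by
    apply ContinuousOn.mul (by fun_prop)
    apply ContinuousOn.add
    · apply ContinuousOn.div (by fun_prop) (by fun_prop)
      intro p hp
      have := (g.pos p hp).1
      positivity
    · exact ContinuousOn.abs (by fun_prop)
  have hr : ∀ p ∈ D, 0 < p.1 := fun p hp => (g.pos p (subset_closure hp)).1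
  have hA0 : ∀ p ∈ D, 0 ≤ A p := fun p hp => by
    have := hr p hp
    simp only [A]; positivity
  have hB0 : ∀ p ∈ D, 0 ≤ B p := fun p hp => by
    have := hr p hp
    simp only [B]; positivity
  have iA : ∫ p in D, A p ≤ 6 * W * y := by
    have := cmp (fun p => 3 * W * A p) (18 * W ^ 2) 1 (by fun_prop) (by norm_num) ?_
    · rw [integral_const_mul] at this
      have h3 : 3 * W * ∫ p in D, A p ≤ 3 * W * (6 * W * y) := by linarith
      exact le_of_mul_le_mul_left h3 (by positivity)
    · intro p hp
      have r0 := hr p hp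
      have := v0 p
      simp only [A, hR]
      rw [abs_mul, abs_of_nonneg (by positivity : 0 ≤ 2 * v p)]
      have e1 : 0 ≤ p.1 * v p * (9 * W ^ 2 - 6 * W * |ur p| + ur p ^ 2 + uz p ^ 2) := by
        apply mul_nonneg (by positivity)
        nlinarith [sq_nonneg (3 * W - |ur p|), sq_abs (ur p), sq_nonneg (uz p)]
      have e2 : 0 ≤ 2 * W * (v p ^ 2 * p.1⁻¹) := by positivity
      linear_combination e1 + e2
  have iB : ∫ p in D, B p ≤ 9 * W * y := by
    have := cmp (fun p => 3 * W * B p) (27 * W ^ 2) 2 (by fun_prop) (by norm_num) ?_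
    · rw [integral_const_mul] at this
      have h3 : 3 * W * ∫ p in D, B p ≤ 3 * W * (9 * W * y) := by linarith
      exact le_of_mul_le_mul_left h3 (by positivity)
    · intro p hp
      have r0 := hr p hp
      have := v0 p
      simp only [B, hR]
      rw [abs_mul, abs_of_nonneg (by positivity : 0 ≤ 2 * v p)]
      have e1 : 0 ≤ p.1 * v p * (9 * W ^ 2 - 6 * W * |uz p| + 2 * uz p ^ 2 + 2 * ur p ^ 2) := by
        apply mul_nonneg (by positivity)
        nlinarith [sq_nonneg (3 * W - |uz p|), sq_abs (uz p), sq_nonneg (ur p), sq_nonneg (uz p)]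
      have e2 : 0 ≤ W * (v p ^ 2 * p.1⁻¹) := by positivity
      have f3 : p.1 * (v p ^ 2 / p.1 ^ 2) = v p ^ 2 * p.1⁻¹ := by field_simp
      linear_combination e1 + e2 + 3 * W * f3
  have iP : ∫ p in D, v p ^ 2 * p.1⁻¹ ≤ 9 / 2 * W * y := by
    have := cmp (fun p => 2 * W * (v p ^ 2 * p.1⁻¹)) (9 * W ^ 2) 1 (by fun_prop) (by norm_num) ?_
    · rw [integral_const_mul] at this
      have h3 : 2 * W * ∫ p in D, v p ^ 2 * p.1⁻¹ ≤ 2 * W * (9 / 2 * W * y) := by linarith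
      exact le_of_mul_le_mul_left h3 (by positivity)
    · intro p hp
      have r0 := hr p hp
      have := v0 p
      simp only [hR]
      have e1 : 0 ≤ p.1 * v p * (uz p ^ 2 + ur p ^ 2) := by positivity
      linear_combination e1
  have iQ : ∫ p in D, (p.1 * v p ^ 2) ^ 2 ≤ 54 * W ^ 2 * y ^ 2 := by
    have := prod_bound D g.meas (fun p => p.1 * v p ^ 2) A B (g.intg (by fun_prop)) (g.intg cA)
      (g.intg cB) (fun p hp => by have := hr p hp; positivity) hA0 hB0 ?_ ?_ (g.intg (by fun_prop))
    · have hb : 0 ≤ ∫ p in D, B p := setIntegral_nonneg g.meas hB0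
      have := this.trans (mul_le_mul iA iB hb (by positivity))
      linarith
    · intro p hp
      rcases g.secr p.2 with h | ⟨ρ, hρ, h, -, h1⟩
      · exact absurd (show p.1 ∈ {r : ℝ | (r, p.2) ∈ D} from hp) (by rw [h]; simp)
      have hpm : p.1 ∈ Ico ρ 1 := by rw [← h]; exact hp
      have hs := segr hρ h
      have cF : ContinuousOn (fun p : ℝ × ℝ => 1 * v p ^ 2 + p.1 * (2 * v p * ur p)) (closure D) := by
        fun_prop
      have ft := ftcr hρ h (fun p => p.1 * v p ^ 2)
        (fun p => 1 * v p ^ 2 + p.1 * (2 * v p * ur p))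
        (fun p hp => (hasDerivAt_id p.1).mul (g.dvr k p hp)) cF p.1 ⟨hpm.1, hpm.2.le⟩
      have z1 : v (1, p.2) = 0 := vv_zero hk0 h1
      simp only [z1, Prod.mk.eta] at ft
      have cAs : ContinuousOn (fun r => A (r, p.2)) (Icc ρ 1) :=
        cA.comp (by fun_prop) (fun r hr => hs r hr)
      have cFs : ContinuousOn (fun r => 1 * v (r, p.2) ^ 2 + r * (2 * v (r, p.2) * ur (r, p.2)))
          (Icc ρ 1) :=
        cF.comp (f := fun r : ℝ => (r, p.2)) (by fun_prop) (fun r hr => hs r hr)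
      have hsub : uIcc p.1 1 ⊆ Icc ρ 1 := by
        rw [uIcc_of_le hpm.2.le]; exact Icc_subset_Icc_left hpm.1
      have m1 : ∫ r in p.1..1, - A (r, p.2) ≤
          ∫ r in p.1..1, (1 * v (r, p.2) ^ 2 + r * (2 * v (r, p.2) * ur (r, p.2))) := by
        apply intervalIntegral.integral_mono_on hpm.2.le
          (cAs.mono hsub).neg.intervalIntegrable (cFs.mono hsub).intervalIntegrable
        intro r hr'
        have r0 := (g.pos _ (hs r ⟨hpm.1.trans hr'.1, hr'.2⟩)).1
        simp only [A, Pi.neg_apply] at r0 ⊢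
        have := mul_le_mul_of_nonneg_left (neg_abs_le (2 * v (r, p.2) * ur (r, p.2))) r0.le
        nlinarith [sq_nonneg (v (r, p.2))]
      rw [ft, intervalIntegral.integral_neg] at m1
      have m2 : ∫ r in p.1..1, A (r, p.2) ≤ ∫ r in {r | (r, p.2) ∈ D}, A (r, p.2) := by
        rw [intervalIntegral.integral_of_le hpm.2.le, integral_Ioc_eq_integral_Ioo, h]
        apply setIntegral_mono_set
        · exact (cAs.integrableOn_Icc).mono_set Ico_subset_Icc_self
        · rw [Filter.EventuallyLE, ae_restrict_iff' measurableSet_Ico]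
          refine Filter.Eventually.of_forall fun r hr' => ?_
          exact hA0 (r, p.2) (by rw [← h] at hr'; exact hr')
        · exact Filter.Eventually.of_forall fun r hr' => ⟨hpm.1.trans hr'.1.le, hr'.2⟩
      linarith
    · intro p hp
      rcases g.secz p.1 with h | ⟨H, hrH, hH, h, -, -⟩
      · exact absurd (show p.2 ∈ {z : ℝ | (p.1, z) ∈ D} from hp) (by rw [h]; simp)
      have hpm : p.2 ∈ Ioo 0 H := by rw [← h]; exact hp
      have := g.colz k hrH hH h p.2 ⟨hpm.1.le, hpm.2.le⟩
      rw [← hv] at this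
      simp only [B]
      rw [integral_const_mul]
      exact mul_le_mul_of_nonneg_left this (hr p hp).le
  have fin : ∫ p in D, 2 * d ^ 2 * (p.1 * vv u (k + d) p) ≤
      ∫ p in D, (l * (p.1 * v p ^ 2) ^ 2 + l⁻¹ * (v p ^ 2 * p.1⁻¹)) := by
    apply setIntegral_mono_on (g.intg (by fun_prop)) (g.intg (by fun_prop)) g.meas
    intro p hp
    have r0 := hr p hp
    have r1 := (g.pos p (subset_closure hp)).2
    rcases le_total (u p) (k + d) with h | h
    · have : vv u (k + d) p = 0 := by simp [vv, h]
      rw [this]; simp; positivity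
    · have e1 : vv u (k + d) p = u p - (k + d) := by simp [vv]; linarith
      have e2 : v p = u p - k := by simp [hv, vv]; linarith
      have e3 : vv u (k + d) p ≤ v p := by linarith
      have e4 : d ≤ v p := by linarith
      have w0 := vv_nonneg u (k + d) p
      have e5 : d ^ 2 * vv u (k + d) p ≤ v p ^ 2 * v p :=
        mul_le_mul (pow_le_pow_left₀ hd.le e4 2) e3 w0 (by positivity)
      have e6 : 2 * p.1 * (d ^ 2 * vv u (k + d) p) ≤ 2 * p.1 * (v p ^ 2 * v p) :=
        mul_le_mul_of_nonneg_left e5 (by positivity)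
      have e7 : 2 * p.1 * (v p ^ 2 * v p) ≤ l * (p.1 * v p ^ 2) ^ 2 + l⁻¹ * (v p ^ 2 * p.1⁻¹) := by
        have h1 : 0 ≤ v p ^ 2 * (l⁻¹ * p.1⁻¹) *
            ((l * p.1 ^ 2 * v p - 1) ^ 2 + l ^ 2 * p.1 ^ 3 * v p ^ 2 * (1 - p.1)) := by
          have : 0 ≤ 1 - p.1 := by linarith
          positivity
        have h2 : v p ^ 2 * (l⁻¹ * p.1⁻¹) *
            ((l * p.1 ^ 2 * v p - 1) ^ 2 + l ^ 2 * p.1 ^ 3 * v p ^ 2 * (1 - p.1)) =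
            l * (p.1 * v p ^ 2) ^ 2 + l⁻¹ * (v p ^ 2 * p.1⁻¹) - 2 * p.1 * (v p ^ 2 * v p) := by
          field_simp
          ring
        linarith
      linarith
  rw [integral_const_mul, integral_add (g.intg (by fun_prop)) (g.intg (by fun_prop)),
    integral_const_mul, integral_const_mul] at fin
  have q1 := mul_le_mul_of_nonneg_left iQ hl.le
  have q2 := mul_le_mul_of_nonneg_left iP (inv_nonneg.2 hl.le)
  exact fin.trans (by linarith)

lemma stepS (g : Geo D u ur uz urr uzz ω ωz W) (k : ℝ) (hk : 4 * W ≤ k) (S t : ℝ) (hS : 1 ≤ S)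
    (ht : 0 < t) (h : yy D u k ≤ S ^ 2 * t ^ 4) :
    yy D u (k + 24 * W * S * t) ≤ S ^ 2 * (t / 2) ^ 4 := by
  have hW := g.hW
  have hW0 : 0 < W := by linarith
  have hS0 : 0 < S := by linarith
  have y0 := g.yy_nonneg k
  have := g.step k hk (24 * W * S * t) (W * S ^ 2 * t ^ 2)⁻¹ (by positivity) (by positivity)
  rw [inv_inv] at this
  set y := yy D u k
  set y' := yy D u (k + 24 * W * S * t)
  have e1 : (W * S ^ 2 * t ^ 2)⁻¹ * (54 * W ^ 2 * y ^ 2) ≤ 54 * W * S ^ 2 * t ^ 6 := by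
    calc _ ≤ (W * S ^ 2 * t ^ 2)⁻¹ * (54 * W ^ 2 * (S ^ 2 * t ^ 4) ^ 2) := by gcongr
      _ = _ := by field_simp
  have e2 : W * S ^ 2 * t ^ 2 * (9 / 2 * W * y) ≤ 9 / 2 * W ^ 2 * S ^ 4 * t ^ 6 := by
    calc _ ≤ W * S ^ 2 * t ^ 2 * (9 / 2 * W * (S ^ 2 * t ^ 4)) := by gcongr
      _ = _ := by ring
  have e3 : 54 * W * S ^ 2 * t ^ 6 ≤ 54 * W ^ 2 * S ^ 4 * t ^ 6 := by
    have : W * S ^ 2 ≤ W ^ 2 * S ^ 4 :=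
      mul_le_mul (by nlinarith) (pow_le_pow_right₀ hS (by norm_num)) (by positivity) (by positivity)
    nlinarith [pow_pos ht 6]
  have e4 : (1152 * W ^ 2 * S ^ 2 * t ^ 2) * y' ≤ (1152 * W ^ 2 * S ^ 2 * t ^ 2) * (S ^ 2 * (t / 2) ^ 4) := by
    have : 0 ≤ W ^ 2 * S ^ 4 * t ^ 6 := by positivity
    nlinarith
  exact le_of_mul_le_mul_left e4 (by positivity)

lemma iter (g : Geo D u ur uz urr uzz ω ωz W) (S : ℝ) (hS : 1 ≤ S)
    (h : yy D u (4 * W) ≤ S ^ 2) (n : ℕ) :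
    yy D u (4 * W + 48 * W * S * (1 - (1 / 2) ^ n)) ≤ S ^ 2 * ((1 / 2) ^ n) ^ 4 := by
  have hW := g.hW
  induction n with
  | zero => simpa using h
  | succ n ih =>
    have := g.stepS _ ?_ S ((1 / 2) ^ n) hS (by positivity) ih
    · convert this using 2
      · ring
      · ring
    · have h1 : ((1:ℝ) / 2) ^ n ≤ 1 := pow_le_one₀ (by norm_num) (by norm_num)
      have : 0 ≤ 48 * W * S * (1 - (1 / 2) ^ n) :=
        mul_nonneg (by positivity) (by linarith)
      linarith

lemma yy_anti (g : Geo D u ur uz urr uzz ω ωz W) {k l : ℝ} (h : k ≤ l) : yy D u l ≤ yy D u k := by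
  have c1 := g.cvv k
  have c2 := g.cvv l
  apply setIntegral_mono_on (g.intg (by fun_prop)) (g.intg (by fun_prop)) g.meas
  intro p hp
  have r0 := (g.pos p (subset_closure hp)).1
  apply mul_le_mul_of_nonneg_left _ r0.le
  exact max_le_max (by linarith) le_rfl

lemma final (g : Geo D u ur uz urr uzz ω ωz W) (S : ℝ) (hS : 1 ≤ S)
    (h : yy D u (4 * W) ≤ S ^ 2) : ∀ p ∈ D, u p ≤ 4 * W + 48 * W * S := by
  have hW := g.hW
  have hz : yy D u (4 * W + 48 * W * S) ≤ 0 := by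
    have hl : Filter.Tendsto (fun n : ℕ => S ^ 2 * (((1:ℝ) / 2) ^ n) ^ 4) Filter.atTop (nhds 0) := by
      have := ((tendsto_pow_atTop_nhds_zero_of_lt_one (r := (1:ℝ)/2) (by norm_num) (by norm_num)).pow 4).const_mul (S ^ 2)
      simpa using this
    refine ge_of_tendsto' hl fun n => le_trans (g.yy_anti ?_) (g.iter S hS h n)
    have h1 : (0:ℝ) < ((1:ℝ) / 2) ^ n := by positivity
    have : 0 ≤ 48 * W * S * (1 / 2) ^ n := by positivity
    linarith
  have hz0 := le_antisymm hz (g.yy_nonneg _)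
  set K := 4 * W + 48 * W * S
  have c1 := g.cvv K
  have cG : ContinuousOn (fun p : ℝ × ℝ => p.1 * vv u K p) (closure D) := by fun_prop
  have hnn : 0 ≤ᵐ[volume.restrict D] fun p : ℝ × ℝ => p.1 * vv u K p := by
    rw [Filter.EventuallyLE, ae_restrict_iff' g.meas]
    exact Filter.Eventually.of_forall fun p hp =>
      mul_nonneg (g.pos p (subset_closure hp)).1.le (vv_nonneg u K p)
  have hae := (integral_eq_zero_iff_of_nonneg_ae hnn (g.intg cG)).1 hz0
  have heq := Measure.eqOn_of_ae_eq hae (cG.mono subset_closure) continuousOn_const g.int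
  intro p hp
  have h1 : p.1 * vv u K p = 0 := heq hp
  have h2 : vv u K p = 0 := by
    rcases mul_eq_zero.1 h1 with h | h
    · exact absurd h (g.pos p (subset_closure hp)).1.ne'
    · exact h
  have : u p - K ≤ vv u K p := le_max_left _ _
  linarith

end Geo

lemma rW_pos (j : ℕ) : 0 < rW j := by unfold rW; positivity
lemma rW_zero : rW 0 = 1 := by simp [rW]
lemma rW_one : rW 1 = 1 / 2 := by
  simp only [rW, Nat.cast_one]; rw [Real.rpow_neg_one]; norm_num
lemma rW_lt {i j : ℕ} (h : i < j) : rW j < rW i := by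
  unfold rW
  apply Real.rpow_lt_rpow_of_exponent_lt (by norm_num)
  have : (i : ℝ) < j := by exact_mod_cast h
  linarith
lemma rW_le {i j : ℕ} (h : i ≤ j) : rW j ≤ rW i := by
  rcases h.eq_or_lt with h | h
  · rw [h]
  · exact (rW_lt h).le
lemma rW_le_one (j : ℕ) : rW j ≤ 1 := by rw [← rW_zero]; exact rW_le (Nat.zero_le j)
lemma hH_pos (β : ℝ) (j : ℕ) : 0 < hH β j := by unfold hH; positivity
lemma hH_one (β : ℝ) : hH β 1 = 1 := by simp [hH]
lemma hH_le {β : ℝ} (hβ : 1 < β) {i j : ℕ} (h : i ≤ j) : hH β j ≤ hH β i := by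
  unfold hH
  apply Real.rpow_le_rpow_of_exponent_le (by norm_num)
  have : (i : ℝ) ≤ j := by exact_mod_cast h
  nlinarith
lemma hH_le_one {β : ℝ} (hβ : 1 < β) {j : ℕ} (h : 1 ≤ j) : hH β j ≤ 1 := by
  rw [← hH_one β]; exact hH_le hβ h

lemma rW_sq {β : ℝ} (hβ : β ≤ 1.1) {j : ℕ} (h : 1 ≤ j) : rW (j - 1) ^ 2 ≤ hH β j := by
  unfold rW hH
  rw [← Real.rpow_natCast, ← Real.rpow_mul (by norm_num)]
  apply Real.rpow_le_rpow_of_exponent_le (by norm_num)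
  rw [Nat.cast_sub h]
  have : (1 : ℝ) ≤ j := by exact_mod_cast h
  push_cast
  nlinarith

lemma mem_Ddom {β : ℝ} {m : ℕ} {r z : ℝ} : (r, z) ∈ Ddom β m ↔
    ∃ j, 1 ≤ j ∧ j ≤ m ∧ rW j ≤ r ∧ r < rW (j - 1) ∧ 0 < z ∧ z < hH β j := by
  simp only [Ddom, mem_iUnion, Finset.mem_Icc, Srect, mem_setOf_eq, exists_prop, and_assoc]

lemma Srect_eq (β : ℝ) (j : ℕ) : Srect β j = Ico (rW j) (rW (j - 1)) ×ˢ Ioo 0 (hH β j) := by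
  ext p; simp [Srect, and_assoc]

lemma Srect_sub {β : ℝ} {m j : ℕ} (h1 : 1 ≤ j) (h2 : j ≤ m) : Srect β j ⊆ Ddom β m := by
  rintro ⟨r, z⟩ hp
  exact mem_Ddom.2 ⟨j, h1, h2, hp⟩

lemma Ddom_meas (β : ℝ) (m : ℕ) : MeasurableSet (Ddom β m) := by
  unfold Ddom
  refine Finset.measurableSet_biUnion _ fun j _ => ?_
  rw [Srect_eq]
  exact measurableSet_Ico.prod measurableSet_Ioo

lemma Ddom_sub {β : ℝ} (hβ : 1 < β) (m : ℕ) : Ddom β m ⊆ Icc (rW m) 1 ×ˢ Icc 0 1 := by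
  rintro ⟨r, z⟩ hp
  obtain ⟨j, h1, h2, h3, h4, h5, h6⟩ := mem_Ddom.1 hp
  exact ⟨⟨(rW_le h2).trans h3, h4.le.trans (rW_le_one _)⟩, h5.le, h6.le.trans (hH_le_one hβ h1)⟩

lemma Ddom_csub {β : ℝ} (hβ : 1 < β) (m : ℕ) : closure (Ddom β m) ⊆ Icc (rW m) 1 ×ˢ Icc 0 1 :=
  closure_minimal (Ddom_sub hβ m) (isClosed_Icc.prod isClosed_Icc)

lemma Ddom_cpt {β : ℝ} (hβ : 1 < β) (m : ℕ) : IsCompact (closure (Ddom β m)) :=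
  (isCompact_Icc.prod isCompact_Icc).of_isClosed_subset isClosed_closure (Ddom_csub hβ m)

lemma Ddom_int (β : ℝ) (m : ℕ) : Ddom β m ⊆ closure (interior (Ddom β m)) := by
  rintro ⟨r, z⟩ hp
  obtain ⟨j, h1, h2, h3, h4, h5, h6⟩ := mem_Ddom.1 hp
  have hs : Ioo (rW j) (rW (j - 1)) ×ˢ Ioo 0 (hH β j) ⊆ interior (Ddom β m) := by
    apply interior_maximal _ (isOpen_Ioo.prod isOpen_Ioo)
    refine Subset.trans ?_ (Srect_sub h1 h2)
    rw [Srect_eq]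
    exact prod_mono Ioo_subset_Ico_self subset_rfl
  apply closure_mono hs
  rw [closure_prod_eq, closure_Ioo (rW_lt (by omega)).ne, closure_Ioo (hH_pos β j).ne]
  exact ⟨⟨h3, h4.le⟩, h5.le, h6.le⟩

lemma Ddom_secz {β : ℝ} (m : ℕ) (r : ℝ) : {z : ℝ | (r, z) ∈ Ddom β m} = ∅ ∨
    ∃ j, 1 ≤ j ∧ j ≤ m ∧ rW j ≤ r ∧ r < rW (j - 1) ∧ {z : ℝ | (r, z) ∈ Ddom β m} = Ioo 0 (hH β j) := by
  by_cases h : ∃ j, 1 ≤ j ∧ j ≤ m ∧ rW j ≤ r ∧ r < rW (j - 1)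
  · right
    obtain ⟨j, h1, h2, h3, h4⟩ := h
    refine ⟨j, h1, h2, h3, h4, ?_⟩
    ext z
    simp only [mem_setOf_eq, mem_Ioo, mem_Ddom]
    constructor
    · rintro ⟨i, g1, g2, g3, g4, g5, g6⟩
      have : i = j := by
        rcases lt_trichotomy i j with h | h | h
        · have := rW_le (show i ≤ j - 1 by omega); linarith
        · exact h
        · have := rW_le (show j ≤ i - 1 by omega); linarith
      subst this
      exact ⟨g5, g6⟩
    · rintro ⟨g5, g6⟩
      exact ⟨j, h1, h2, h3, h4, g5, g6⟩
  · left
    ext z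
    simp only [mem_setOf_eq, mem_empty_iff_false, iff_false, mem_Ddom]
    rintro ⟨i, g1, g2, g3, g4, g5, g6⟩
    exact h ⟨i, g1, g2, g3, g4⟩

lemma Ddom_secr {β : ℝ} (hβ : 1 < β) (m : ℕ) (hm : 1 ≤ m) (z : ℝ) :
    {r : ℝ | (r, z) ∈ Ddom β m} = ∅ ∨
    ∃ j, 1 ≤ j ∧ j ≤ m ∧ 0 < z ∧ z < hH β j ∧ (j < m → hH β (j + 1) ≤ z) ∧
      {r : ℝ | (r, z) ∈ Ddom β m} = Ico (rW j) 1 := by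
  classical
  by_cases h : 0 < z ∧ z < 1
  · right
    obtain ⟨hz0, hz1⟩ := h
    set j := Nat.findGreatest (fun j => z < hH β j) m with hj
    have p1 : z < hH β 1 := by rw [hH_one]; exact hz1
    have hj1 : 1 ≤ j := Nat.le_findGreatest hm p1
    have hjm : j ≤ m := Nat.findGreatest_le m
    have hjz : z < hH β j := Nat.findGreatest_spec (P := fun j => z < hH β j) hm p1
    have hmax : ∀ i, i ≤ m → z < hH β i → i ≤ j := fun i h1 h2 => Nat.le_findGreatest h1 h2
    refine ⟨j, hj1, hjm, hz0, hjz, ?_, ?_⟩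
    · intro hlt
      by_contra hc
      have := hmax (j + 1) hlt (not_le.1 hc)
      omega
    · ext r
      simp only [mem_setOf_eq, mem_Ico, mem_Ddom]
      constructor
      · rintro ⟨i, g1, g2, g3, g4, g5, g6⟩
        exact ⟨(rW_le (hmax i g2 g6)).trans g3, g4.trans_le (rW_le_one _)⟩
      · rintro ⟨g1, g2⟩
        have ex : ∃ i, rW i ≤ r := ⟨j, g1⟩
        have hi := Nat.find_spec ex
        have hmin : ∀ i, i < Nat.find ex → ¬ rW i ≤ r := fun i hi => Nat.find_min ex hi
        have hij : Nat.find ex ≤ j := Nat.find_min' ex g1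
        set i := Nat.find ex
        have hi1 : 1 ≤ i := by
          by_contra hc
          have h0 : i = 0 := by omega
          rw [h0, rW_zero] at hi
          linarith
        exact ⟨i, hi1, hij.trans hjm, hi, not_le.1 (hmin (i - 1) (by omega)), hz0,
          hjz.trans_le (hH_le hβ hij)⟩
  · left
    ext r
    simp only [mem_setOf_eq, mem_empty_iff_false, iff_false, mem_Ddom]
    rintro ⟨i, g1, g2, g3, g4, g5, g6⟩
    exact h ⟨g5, g6.trans_le (hH_le_one hβ g1)⟩

lemma pdr_lem {f : ℝ × ℝ → ℝ} {U : Set (ℝ × ℝ)} (hU : IsOpen U) (n : ℕ)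
    (hf : ContDiffOn ℝ (n + 1) f U) :
    (∀ p ∈ U, HasDerivAt (fun r => f (r, p.2)) (pdr f p) p.1) ∧ ContDiffOn ℝ n (pdr f) U := by
  have key : ∀ p ∈ U, HasDerivAt (fun r => f (r, p.2)) (fderiv ℝ f p (1, 0)) p.1 := by
    intro p hp
    have h1 : HasFDerivAt f (fderiv ℝ f p) (p.1, p.2) :=
      ((hf.contDiffAt (hU.mem_nhds hp)).differentiableAt (by simp)).hasFDerivAt
    exact h1.comp_hasDerivAt (f := fun r : ℝ => (r, p.2)) p.1
      ((hasDerivAt_id p.1).prodMk (hasDerivAt_const p.1 p.2))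
  have e : ∀ p ∈ U, pdr f p = fderiv ℝ f p (1, 0) := fun p hp => (key p hp).deriv
  refine ⟨fun p hp => by rw [e p hp]; exact key p hp, ?_⟩
  refine ContDiffOn.congr ?_ e
  exact (hf.fderiv_of_isOpen hU le_rfl).clm_apply contDiffOn_const

lemma pdz_lem {f : ℝ × ℝ → ℝ} {U : Set (ℝ × ℝ)} (hU : IsOpen U) (n : ℕ)
    (hf : ContDiffOn ℝ (n + 1) f U) :
    (∀ p ∈ U, HasDerivAt (fun z => f (p.1, z)) (pdz f p) p.2) ∧ ContDiffOn ℝ n (pdz f) U := by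
  have key : ∀ p ∈ U, HasDerivAt (fun z => f (p.1, z)) (fderiv ℝ f p (0, 1)) p.2 := by
    intro p hp
    have h1 : HasFDerivAt f (fderiv ℝ f p) (p.1, p.2) :=
      ((hf.contDiffAt (hU.mem_nhds hp)).differentiableAt (by simp)).hasFDerivAt
    exact h1.comp_hasDerivAt (f := fun z : ℝ => (p.1, z)) p.2
      ((hasDerivAt_const p.2 p.1).prodMk (hasDerivAt_id p.2))
  have e : ∀ p ∈ U, pdz f p = fderiv ℝ f p (0, 1) := fun p hp => (key p hp).deriv
  refine ⟨fun p hp => by rw [e p hp]; exact key p hp, ?_⟩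
  refine ContDiffOn.congr ?_ e
  exact (hf.fderiv_of_isOpen hU le_rfl).clm_apply contDiffOn_const

lemma Geo.neg {D : Set (ℝ × ℝ)} {u ur uz urr uzz ω ωz : ℝ × ℝ → ℝ} {W : ℝ}
    (g : Geo D u ur uz urr uzz ω ωz W) : Geo D (fun p => - u p) (fun p => - ur p) (fun p => - uz p)
      (fun p => - urr p) (fun p => - uzz p) (fun p => - ω p) (fun p => - ωz p) W where
  meas := g.meas
  cpt := g.cpt
  pos := g.pos
  int := g.int
  secr := by simpa using g.secr
  secz := by simpa using g.secz
  cu := g.cu.neg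
  cur := g.cur.neg
  cuz := g.cuz.neg
  curr := g.curr.neg
  cuzz := g.cuzz.neg
  cω := g.cω.neg
  cωz := g.cωz.neg
  dur := fun p hp => (g.dur p hp).neg
  duz := fun p hp => (g.duz p hp).neg
  durr := fun p hp => (g.durr p hp).neg
  duzz := fun p hp => (g.duzz p hp).neg
  dωz := fun p hp => (g.dωz p hp).neg
  pde := fun p hp => by rw [← g.pde p hp]; ring
  hW := g.hW
  hω := fun p hp => by rw [abs_neg]; exact g.hω p hp

lemma Geo.mk' (β : ℝ) (hβ : 1 < β) (hβ' : β ≤ 1.1) (m : ℕ) (hm : 1 ≤ m) (u ω : ℝ × ℝ → ℝ)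
    (hu : ∃ U : Set (ℝ × ℝ), IsOpen U ∧ closure (Ddom β m) ⊆ U ∧ ContDiffOn ℝ 2 u U)
    (hω : ∃ U : Set (ℝ × ℝ), IsOpen U ∧ closure (Ddom β m) ⊆ U ∧ ContDiffOn ℝ 1 ω U)
    (hp : ∀ p ∈ Ddom β m, cylLap u p - u p / p.1 ^ 2 = pdz ω p)
    (hH' : ∀ p ∈ bdH β m, pdz u p = 0)
    (hV : ∀ p ∈ bdV β m, u p = 0) :
    Geo (Ddom β m) u (pdr u) (pdz u) (pdr (pdr u)) (pdz (pdz u)) ω (pdz ω)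
      (sSup ((fun q => |ω q|) '' Ddom β m) + 1) := by
  obtain ⟨U, hU, hDU, hu⟩ := hu
  obtain ⟨V, hVo, hDV, hω⟩ := hω
  have a1 := pdr_lem hU 1 (hu.of_le (by norm_num))
  have a2 := pdr_lem hU 0 (a1.2.of_le (by norm_num))
  have b1 := pdz_lem hU 1 (hu.of_le (by norm_num))
  have b2 := pdz_lem hU 0 (b1.2.of_le (by norm_num))
  have c1 := pdz_lem hVo 0 (hω.of_le (by norm_num))
  have cω : ContinuousOn ω (closure (Ddom β m)) := hω.continuousOn.mono hDV
  have hbdd : BddAbove ((fun q => |ω q|) '' Ddom β m) :=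
    ((Ddom_cpt hβ m).bddAbove_image cω.abs).mono (image_mono subset_closure)
  have hs0 : 0 ≤ sSup ((fun q => |ω q|) '' Ddom β m) := by
    apply Real.sSup_nonneg
    rintro _ ⟨q, -, rfl⟩
    exact abs_nonneg _
  refine { meas := Ddom_meas β m, cpt := Ddom_cpt hβ m, pos := ?_, int := Ddom_int β m,
           secr := ?_, secz := ?_, cu := hu.continuousOn.mono hDU,
           cur := a1.2.continuousOn.mono hDU, cuz := b1.2.continuousOn.mono hDU,
           curr := a2.2.continuousOn.mono hDU, cuzz := b2.2.continuousOn.mono hDU,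
           cω := cω, cωz := c1.2.continuousOn.mono hDV,
           dur := fun p hp => a1.1 p (hDU hp), duz := fun p hp => b1.1 p (hDU hp),
           durr := fun p hp => a2.1 p (hDU hp), duzz := fun p hp => b2.1 p (hDU hp),
           dωz := fun p hp => c1.1 p (hDV hp), pde := ?_, hW := by linarith, hω := ?_ }
  · intro p hp
    have := (Ddom_csub hβ m hp).1
    exact ⟨(rW_pos m).trans_le this.1, this.2⟩
  · intro z
    rcases Ddom_secr hβ m hm z with h | ⟨j, h1, h2, h3, h4, h5, h6⟩
    · exact Or.inl h
    · refine Or.inr ⟨rW j, ?_, h6, ?_, ?_⟩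
      · rw [← rW_zero]; exact rW_lt (by omega)
      · apply hV
        rcases h2.eq_or_lt with h | h
        · subst h
          exact Or.inl (Or.inr ⟨rfl, h3.le, h4.le⟩)
        · right
          simp only [mem_iUnion, Finset.mem_Icc]
          exact ⟨j, ⟨h1, by omega⟩, rfl, h5 h, h4.le⟩
      · exact hV _ (Or.inl (Or.inl ⟨rfl, h3.le, h4.le.trans (hH_le_one hβ h1)⟩))
  · intro r
    rcases Ddom_secz (β := β) m r with h | ⟨j, h1, h2, h3, h4, h5⟩
    · exact Or.inl h
    · have r0 : 0 < r := (rW_pos j).trans_le h3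
      refine Or.inr ⟨hH β j, ?_, hH_pos β j, h5, ?_, ?_⟩
      · exact (pow_le_pow_left₀ r0.le h4.le 2).trans (rW_sq hβ' h1)
      · exact hH' _ (Or.inl ⟨rfl, (rW_le h2).trans h3, h4.le.trans (rW_le_one _)⟩)
      · apply hH'
        right
        simp only [mem_iUnion, Finset.mem_Icc]
        exact ⟨j, ⟨h1, h2⟩, rfl, h3, h4.le⟩
  · intro p hp'
    rw [← hp p hp', cylLap]
    ring
  · intro p hp'
    refine le_on_closure (f := fun p => |ω p|) (g := fun _ => _) (fun q hq => ?_) cω.abs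
      continuousOn_const hp'
    have := le_csSup hbdd (mem_image_of_mem (fun q => |ω q|) hq)
    linarith

lemma I_ge_one (β : ℝ) (m : ℕ) (hm : 1 ≤ m) (u : ℝ × ℝ → ℝ)
    (hi : IntegrableOn (fun q : ℝ × ℝ => (|u q| + 1) ^ 2 * (2 * π * q.1)) (Ddom β m))
    (h0 : ∀ p ∈ Ddom β m, 0 < p.1) :
    1 ≤ cylIntegral β m fun q => (|u q| + 1) ^ 2 := by
  have hsub : Srect β 1 ⊆ Ddom β m := Srect_sub le_rfl hm
  have hms : MeasurableSet (Srect β 1) := by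
    rw [Srect_eq]; exact measurableSet_Ico.prod measurableSet_Ioo
  have hvol : volume (Srect β 1) = ENNReal.ofReal (1 / 2) := by
    rw [Srect_eq, Measure.volume_eq_prod, Measure.prod_prod, Real.volume_Ico, Real.volume_Ioo,
      rW_zero, rW_one, hH_one]
    norm_num
  have h1 : ∫ p in Srect β 1, (π : ℝ) ≤ ∫ p in Srect β 1, (|u p| + 1) ^ 2 * (2 * π * p.1) := by
    apply setIntegral_mono_on _ (hi.mono_set hsub) hms
    · intro p hp
      have h2 : 1 / 2 ≤ p.1 := by rw [← rW_one]; exact hp.1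
      have h3 : 1 ≤ (|u p| + 1) ^ 2 := by nlinarith [abs_nonneg (u p)]
      have h4 : π ≤ 2 * π * p.1 := by nlinarith [Real.pi_pos]
      nlinarith [Real.pi_pos]
    · rw [integrableOn_const_iff]; right; rw [hvol]; exact ENNReal.ofReal_lt_top
  have h2 : ∫ p in Srect β 1, (|u p| + 1) ^ 2 * (2 * π * p.1) ≤
      ∫ p in Ddom β m, (|u p| + 1) ^ 2 * (2 * π * p.1) := by
    apply setIntegral_mono_set hi _ (Filter.Eventually.of_forall hsub)
    rw [Filter.EventuallyLE, ae_restrict_iff' (Ddom_meas β m)]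
    refine Filter.Eventually.of_forall fun p hp => ?_
    have := h0 p hp
    have := Real.pi_pos
    simp only [Pi.zero_apply]
    positivity
  rw [setIntegral_const, Measure.real, hvol, ENNReal.toReal_ofReal (by norm_num), smul_eq_mul] at h1
  have := Real.pi_gt_three
  unfold cylIntegral
  linarith

/-- Uniform `L^∞` bound for the solution of
`Δ u - u/r² = ∂_{x₃} ω` with mixed boundary conditions. -/
theorem moser_bound_vr :
    ∃ C : ℝ,
      ∀ (β : ℝ), 1 < β → β ≤ 1.1 → ∀ (m : ℕ), 1 ≤ m →
      ∀ u ω : ℝ × ℝ → ℝ,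
        (∃ U : Set (ℝ × ℝ), IsOpen U ∧ closure (Ddom β m) ⊆ U ∧ ContDiffOn ℝ 2 u U) →
        (∃ U : Set (ℝ × ℝ), IsOpen U ∧ closure (Ddom β m) ⊆ U ∧ ContDiffOn ℝ 1 ω U) →
        (∀ p ∈ Ddom β m, cylLap u p - u p / p.1 ^ 2 = pdz ω p) →
        (∀ p ∈ bdH β m, pdz u p = 0) →
        (∀ p ∈ bdV β m, u p = 0) →
        ∀ p ∈ Ddom β m,
          |u p| ≤ C * (sSup ((fun q => |ω q|) '' Ddom β m) + 1) ^ ((13 : ℝ) / 3)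
            * (cylIntegral β m fun q => (|u q| + 1) ^ 2) ^ ((1 : ℝ) / 2) := by
  refine ⟨52, ?_⟩
  intro β hβ hβ' m hm u ω hu hω hp hH' hV p hpD
  have g := Geo.mk' β hβ hβ' m hm u ω hu hω hp hH' hV
  have gn := g.neg
  set W := sSup ((fun q => |ω q|) '' Ddom β m) + 1
  have hW := g.hW
  have cu := g.cu
  have r0 : ∀ p ∈ Ddom β m, 0 < p.1 := fun p hp => (g.pos p (subset_closure hp)).1
  have cI : ContinuousOn (fun q : ℝ × ℝ => (|u q| + 1) ^ 2 * (2 * π * q.1))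
      (closure (Ddom β m)) := by
    have := cu.abs
    fun_prop
  have hI := I_ge_one β m hm u (g.intg cI) r0
  set I := cylIntegral β m fun q => (|u q| + 1) ^ 2 with hIdef
  rw [← Real.sqrt_eq_rpow]
  have hS : 1 ≤ √I := Real.one_le_sqrt.2 hI
  have hS2 : √I ^ 2 = I := Real.sq_sqrt (by linarith)
  have pw : ∀ q ∈ Ddom β m, ∀ x : ℝ, x ≤ |u q| →
      q.1 * max (x - 4 * W) 0 ≤ (|u q| + 1) ^ 2 * (2 * π * q.1) := by
    intro q hq x hx
    have h1 : max (x - 4 * W) 0 ≤ |u q| := max_le (by linarith) (abs_nonneg _)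
    have h2 : |u q| ≤ (|u q| + 1) ^ 2 := by nlinarith [abs_nonneg (u q)]
    have h3 : (|u q| + 1) ^ 2 ≤ (|u q| + 1) ^ 2 * (2 * π) :=
      le_mul_of_one_le_right (by positivity) (by linarith [Real.pi_gt_three])
    have := mul_le_mul_of_nonneg_left (h1.trans (h2.trans h3)) (r0 q hq).le
    linarith
  have y1 : Geo.yy (Ddom β m) u (4 * W) ≤ √I ^ 2 := by
    rw [hS2]
    refine setIntegral_mono_on (g.intg (continuousOn_fst.mul (g.cvv _))) (g.intg cI) g.meas ?_
    intro q hq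
    exact pw q hq _ (le_abs_self _)
  have y2 : Geo.yy (Ddom β m) (fun p => - u p) (4 * W) ≤ √I ^ 2 := by
    rw [hS2]
    refine setIntegral_mono_on (g.intg (continuousOn_fst.mul (gn.cvv _))) (g.intg cI) g.meas ?_
    intro q hq
    exact pw q hq _ (neg_le_abs _)
  have f1 := g.final _ hS y1 p hpD
  have f2 := gn.final _ hS y2 p hpD
  have f3 : |u p| ≤ 4 * W + 48 * W * √I := abs_le'.2 ⟨f1, f2⟩
  have f4 : W ≤ W ^ ((13 : ℝ) / 3) := by
    conv_lhs => rw [← Real.rpow_one W]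
    exact Real.rpow_le_rpow_of_exponent_le hW (by norm_num)
  have f5 : W ≤ W * √I := le_mul_of_one_le_right (by linarith) hS
  have f6 : W * √I ≤ W ^ ((13 : ℝ) / 3) * √I := mul_le_mul_of_nonneg_right f4 (by linarith)
  linarith
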